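/- arXiv:1605.09238 — 3 statements merged into one kernel-verified Lean document; each statement's English description precedes it below -/
import Mathlib

section
/- Let T>0, p>1, α ∈ (1/p,1], and let f:[0,T]×ℝ→ℝ be continuous and satisfy (H1). Then the energy functional J: L^p([0,T],ℝ) → ℝ defined by J(v) = (1/p)∫_0^T |v(t)|^p dt − ∫_0^T F(t,(_0I_t^α v)(t)) dt satisfies the Palais–Smale condition: every sequence (v_k) in L^p([0,T],ℝ) for which (J(v_k)) is bounded and the Fréchet derivatives satisfy ‖DJ(v_k)‖_{(L^p)^*} → 0 as k → ∞ possesses a subsequence that converges in the L^p norm. -/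
/-!
Write `J(v) = ‖v‖^p / p - G(v)`, where `G` is the nonlinear term. A Palais–Smale sequence `v_k` is
shown to have an `L^p`-Cauchy subsequence, without weak limits and without a formula for `DJ`.

* Boundedness. By Hölder's inequality, the fractional integral maps `L^p` boundedly into `C([0,T])`
  (this uses `α > 1/p`), so the growth condition gives `|G(v)| ≤ A ‖v‖^{r1}` with `r1 < p`, and
  bounded energy forces a bounded norm (`bounded_of_rpow_le`).
* Compactness. The same estimate for differences of kernels gives a uniform modulus of continuity,
  so by Arzelà–Ascoli the fractional integrals of a subsequence are uniformly Cauchy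
  (`exists_subseq_RLint_cauchy`).
* Derivative inequality. Since `‖·‖^p` is convex and `F(t,·)` is Lipschitz on bounded sets, the
  difference quotients of `J` give
  `DJ(v) h ≤ (‖v + h‖^p - ‖v‖^p) / p + M T sup |I^α h|` (`fderiv_le_norm_rpow_sub`).
  With `v = v_k` and `v + h` the midpoint of `v_k` and `v_m`, and again with `k` and `m`
  exchanged, the convexity gap `(‖v_k‖^p + ‖v_m‖^p)/2 - ‖(v_k + v_m)/2‖^p` tends to `0`.
* Uniform convexity. For each `ε > 0` the pointwise inequality
  `|x - y|^p ≤ ε (|x|^p + |y|^p) + C_ε ((|x|^p + |y|^p)/2 - |(x + y)/2|^p)`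
  integrates to a bound of `‖v_k - v_m‖^p` by the convexity gap (`LpT_norm_sub_rpow_le`), so the
  subsequence is Cauchy.
-/

open MeasureTheory Set Filter Topology

/-- Left Riemann-Liouville fractional integral of order `α` on `[0, ·]`. -/
noncomputable def RLint (α : ℝ) (v : ℝ → ℝ) (t : ℝ) : ℝ :=
  (1 / Real.Gamma α) * ∫ s in (0:ℝ)..t, (t - s) ^ (α - 1) * v s

/-- `F(t,x) = ∫_0^x f(t,s) ds`. -/
noncomputable def Fint (f : ℝ → ℝ → ℝ) (t x : ℝ) : ℝ := ∫ s in (0:ℝ)..x, f t s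

/-- The Lebesgue space `L^p([0,T], ℝ)`. -/
noncomputable abbrev LpT (p T : ℝ) :=
  MeasureTheory.Lp ℝ (ENNReal.ofReal p) (volume.restrict (Set.Ioc (0:ℝ) T))

/-- The energy functional `J` on `L^p([0,T], ℝ)`. -/
noncomputable def JLp (T p α : ℝ) (f : ℝ → ℝ → ℝ) (v : LpT p T) : ℝ :=
  (1 / p) * (∫ t in (0:ℝ)..T, |(v : ℝ → ℝ) t| ^ p)
    - ∫ t in (0:ℝ)..T, Fint f t (RLint α (v : ℝ → ℝ) t)

/-! ### Uniform convexity of `L^p` -/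

lemma abs_midpoint_rpow_lt {p : ℝ} (hp : 1 < p) {x y : ℝ} (hxy : x ≠ y) :
    |(x + y) / 2| ^ p < (|x| ^ p + |y| ^ p) / 2 := by
  have hp0 : 0 < p := by linarith
  by_cases h : |x| = |y|
  · rcases abs_eq_abs.1 h with h1 | h1
    · exact absurd h1 hxy
    · have hy : y ≠ 0 := by rintro rfl; simp at h1; exact hxy h1
      have : 0 < |y| := abs_pos.2 hy
      subst h1
      have := Real.rpow_pos_of_pos this p
      simp [Real.zero_rpow hp0.ne', this]
  · have h1 := (strictConvexOn_rpow hp).2 (abs_nonneg x) (abs_nonneg y) h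
      (by norm_num : (0:ℝ) < 1/2) (by norm_num : (0:ℝ) < 1/2) (by norm_num)
    simp only [smul_eq_mul] at h1
    have h2 : |(x + y) / 2| ≤ 1/2 * |x| + 1/2 * |y| := by
      rw [abs_div, abs_two]; linarith [abs_add_le x y]
    have h3 := Real.rpow_le_rpow (abs_nonneg _) h2 hp0.le
    linarith

lemma abs_midpoint_rpow_le {p : ℝ} (hp : 1 < p) (x y : ℝ) :
    |(x + y) / 2| ^ p ≤ (|x| ^ p + |y| ^ p) / 2 := by
  by_cases h : x = y
  · subst h; simp
  · exact (abs_midpoint_rpow_lt hp h).le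

/-- A quantitative form of the strict convexity of `|·|^p`: up to an arbitrarily small multiple of
`|x|^p + |y|^p`, the convexity gap at the midpoint controls `|x - y|^p`. By homogeneity it is
enough to look at the unit sphere of `ℝ²`, where the gap is bounded below on the compact set of
those `(x, y)` that violate the inequality with `C = 0`. -/
lemma exists_abs_sub_rpow_le {p : ℝ} (hp : 1 < p) {ε : ℝ} (hε : 0 < ε) :
    ∃ C : ℝ, 0 ≤ C ∧ ∀ x y : ℝ, |x - y| ^ p ≤
      ε * (|x| ^ p + |y| ^ p) + C * ((|x| ^ p + |y| ^ p) / 2 - |(x + y) / 2| ^ p) := by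
  have hp0 : 0 < p := by linarith
  let d : ℝ × ℝ → ℝ := fun z => (|z.1| ^ p + |z.2| ^ p) / 2 - |(z.1 + z.2) / 2| ^ p
  have hc : ∀ g : ℝ × ℝ → ℝ, Continuous g → Continuous fun z => |g z| ^ p := fun g hg =>
    hg.abs.rpow_const fun _ => Or.inr hp0.le
  have hd : Continuous d :=
    (((hc _ continuous_fst).add (hc _ continuous_snd)).div_const 2).sub
      (hc (fun z => (z.1 + z.2) / 2) (by fun_prop))
  let K : Set (ℝ × ℝ) := Metric.sphere 0 1 ∩
    {z | ε * (|z.1| ^ p + |z.2| ^ p) ≤ |z.1 - z.2| ^ p}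
  have hK : IsCompact K := (isCompact_sphere 0 1).inter_right
    (isClosed_le (((hc _ continuous_fst).add (hc _ continuous_snd)).const_mul ε)
      (hc (fun z => z.1 - z.2) (by fun_prop)))
  have hd0 : ∀ z, 0 ≤ d z := fun z => sub_nonneg.2 (abs_midpoint_rpow_le hp _ _)
  have hsph : ∃ C : ℝ, 0 ≤ C ∧ ∀ z ∈ Metric.sphere (0 : ℝ × ℝ) 1,
      |z.1 - z.2| ^ p ≤ ε * (|z.1| ^ p + |z.2| ^ p) + C * d z := by
    have hnn : ∀ z : ℝ × ℝ, 0 ≤ ε * (|z.1| ^ p + |z.2| ^ p) := fun z => by positivity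
    rcases K.eq_empty_or_nonempty with hE | hne
    · refine ⟨0, le_rfl, fun z hz => ?_⟩
      by_contra! hcon
      have : z ∈ K := ⟨hz, by simp only [zero_mul, add_zero] at hcon; exact hcon.le⟩
      rw [hE] at this; exact this
    · obtain ⟨z0, hz0, hmin⟩ := hK.exists_isMinOn hne hd.continuousOn
      have hne' : z0.1 ≠ z0.2 := by
        intro heq
        have h1 : ε * (|z0.1| ^ p + |z0.2| ^ p) ≤ |z0.1 - z0.2| ^ p := hz0.2
        rw [heq, sub_self, abs_zero, Real.zero_rpow hp0.ne'] at h1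
        have h2 : |z0.2| ^ p ≤ 0 := by
          have := nonpos_of_mul_nonpos_right h1 hε
          linarith
        have h3 : z0.2 = 0 := by
          by_contra h
          exact absurd h2 (not_le.2 (Real.rpow_pos_of_pos (abs_pos.2 h) p))
        have h4 : ‖z0‖ = 1 := by simpa using hz0.1
        have : z0 = 0 := Prod.ext (by simp [heq, h3]) (by simp [h3])
        rw [this] at h4; simp at h4
      have hm : 0 < d z0 := sub_pos.2 (abs_midpoint_rpow_lt hp hne')
      refine ⟨2 ^ p / d z0, by positivity, fun z hz => ?_⟩
      by_cases hzK : z ∈ K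
      · have h1 : d z0 ≤ d z := hmin hzK
        have hz1 : ‖z‖ = 1 := by simpa using hz
        have h2 : |z.1 - z.2| ≤ 2 := by
          have a1 : |z.1| ≤ 1 := hz1 ▸ norm_fst_le z
          have a2 : |z.2| ≤ 1 := hz1 ▸ norm_snd_le z
          linarith [abs_sub z.1 z.2]
        have h3 : |z.1 - z.2| ^ p ≤ 2 ^ p := Real.rpow_le_rpow (abs_nonneg _) h2 hp0.le
        have h4 : (2:ℝ) ^ p ≤ 2 ^ p / d z0 * d z := by
          rw [div_mul_eq_mul_div, le_div_iff₀ hm]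
          gcongr
        linarith [hnn z]
      · have : |z.1 - z.2| ^ p < ε * (|z.1| ^ p + |z.2| ^ p) := by
          by_contra! h
          exact hzK ⟨hz, h⟩
        have h5 : 0 ≤ 2 ^ p / d z0 * d z := mul_nonneg (by positivity) (hd0 z)
        linarith
  obtain ⟨C, hC, hCs⟩ := hsph
  refine ⟨C, hC, fun x y => ?_⟩
  rcases eq_or_ne ((x, y) : ℝ × ℝ) 0 with h0 | h0
  · obtain ⟨rfl, rfl⟩ : x = 0 ∧ y = 0 := by simpa [Prod.ext_iff] using h0
    simp [Real.zero_rpow hp0.ne']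
  · set M := ‖((x, y) : ℝ × ℝ)‖ with hM
    have hM0 : 0 < M := norm_pos_iff.2 h0
    have h1 := hCs (x / M, y / M) (by
      have : ((x / M, y / M) : ℝ × ℝ) = M⁻¹ • (x, y) := by
        ext <;> simp [div_eq_inv_mul]
      rw [mem_sphere_zero_iff_norm, this, norm_smul, ← hM, norm_inv, Real.norm_eq_abs,
        abs_of_pos hM0, inv_mul_cancel₀ hM0.ne'])
    have hs : ∀ w : ℝ, |w / M| ^ p = |w| ^ p / M ^ p := fun w => by
      rw [abs_div, abs_of_pos hM0, Real.div_rpow (abs_nonneg _) hM0.le]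
    have hMp : 0 < M ^ p := Real.rpow_pos_of_pos hM0 p
    simp only [d] at h1
    rw [← sub_div, show (x / M + y / M) / 2 = ((x + y) / 2) / M by ring, hs, hs, hs, hs] at h1
    have h2 := mul_le_mul_of_nonneg_right h1 hMp.le
    rw [div_mul_cancel₀ _ hMp.ne'] at h2
    refine h2.trans (le_of_eq ?_)
    field_simp

lemma LpT_norm_rpow {p T : ℝ} (hp : 1 < p) (v : LpT p T) :
    ‖v‖ ^ p = ∫ t in Ioc 0 T, |(v : ℝ → ℝ) t| ^ p := by
  have hp0 : 0 < p := by linarith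
  rw [Lp.norm_def, (Lp.memLp v).eLpNorm_eq_integral_rpow_norm (by simpa using hp0) (by simp),
    ENNReal.toReal_ofReal (by positivity), ENNReal.toReal_ofReal hp0.le,
    ← Real.rpow_mul (by positivity), inv_mul_cancel₀ hp0.ne', Real.rpow_one]
  simp

lemma LpT_integrable_rpow {p T : ℝ} (hp : 1 < p) (v : LpT p T) :
    Integrable (fun t => |(v : ℝ → ℝ) t| ^ p) (volume.restrict (Ioc 0 T)) := by
  have hp0 : 0 < p := by linarith
  have := (Lp.memLp v).integrable_norm_rpow (by simpa using hp0) (by simp)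
  simpa [ENNReal.toReal_ofReal hp0.le] using this

/-- Uniform convexity of `L^p` in integrated form: a pair with small convexity gap at its midpoint
is close in `L^p`. -/
lemma LpT_norm_sub_rpow_le {p T : ℝ} (hp : 1 < p) [Fact (1 ≤ ENNReal.ofReal p)] {ε : ℝ}
    (hε : 0 < ε) :
    ∃ C : ℝ, 0 ≤ C ∧ ∀ v w : LpT p T, ‖v - w‖ ^ p ≤
      ε * (‖v‖ ^ p + ‖w‖ ^ p) +
        C * ((‖v‖ ^ p + ‖w‖ ^ p) / 2 - ‖(2⁻¹ : ℝ) • (v + w)‖ ^ p) := by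
  obtain ⟨C, hC, h⟩ := exists_abs_sub_rpow_le hp hε
  refine ⟨C, hC, fun v w => ?_⟩
  have i1 := LpT_integrable_rpow hp v
  have i2 := LpT_integrable_rpow hp w
  have i3 := LpT_integrable_rpow hp ((2⁻¹ : ℝ) • (v + w))
  simp only [LpT_norm_rpow hp]
  have i12 : Integrable (fun t => |(v : ℝ → ℝ) t| ^ p + |(w : ℝ → ℝ) t| ^ p)
      (volume.restrict (Ioc 0 T)) := i1.add i2
  have i4 : Integrable (fun t => (|(v : ℝ → ℝ) t| ^ p + |(w : ℝ → ℝ) t| ^ p) / 2 -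
      |(((2⁻¹ : ℝ) • (v + w) : LpT p T) : ℝ → ℝ) t| ^ p)
      (volume.restrict (Ioc 0 T)) := (i12.div_const 2).sub i3
  rw [← integral_add i1 i2, ← integral_const_mul, ← integral_div, ← integral_sub
    (i12.div_const 2) i3, ← integral_const_mul, ← integral_add (i12.const_mul ε) (i4.const_mul C)]
  refine integral_mono_ae (LpT_integrable_rpow hp (v - w))
    ((i12.const_mul ε).add (i4.const_mul C)) ?_
  filter_upwards [Lp.coeFn_sub v w, Lp.coeFn_smul (2⁻¹ : ℝ) (v + w), Lp.coeFn_add v w]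
    with t h1 h2 h3
  have := h ((v : ℝ → ℝ) t) ((w : ℝ → ℝ) t)
  simp only [h1, h2, h3, Pi.sub_apply, Pi.smul_apply, Pi.add_apply, smul_eq_mul]
  rwa [inv_mul_eq_div]

/-! ### Estimates for the Riemann–Liouville integral -/

/-- The kernel of `Γ(α) · RLint α`, namely `s ↦ (t - s)^(α - 1)` for `s < t`, and `0` for
`t ≤ s`. -/
noncomputable def rlKer (α t s : ℝ) : ℝ := if s < t then (t - s) ^ (α - 1) else 0

lemma rlKer_nonneg (α t s : ℝ) : 0 ≤ rlKer α t s := by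
  unfold rlKer
  split_ifs with h
  · exact Real.rpow_nonneg (by linarith) _
  · exact le_rfl

lemma measurable_rlKer (α t : ℝ) : Measurable (rlKer α t) :=
  Measurable.ite measurableSet_Iio (by fun_prop) measurable_const

lemma RLint_eq {T α t : ℝ} (ht : t ∈ Icc 0 T) (v : ℝ → ℝ) :
    RLint α v t = (1 / Real.Gamma α) * ∫ s in Ioc 0 T, rlKer α t s * v s := by
  unfold RLint
  congr 1
  have : (fun s => rlKer α t s * v s) = (Iio t).indicator fun s => (t - s) ^ (α - 1) * v s := by
    ext s
    by_cases h : s < t <;> simp [rlKer, h]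
  rw [this, setIntegral_indicator measurableSet_Iio, intervalIntegral.integral_of_le ht.1,
    integral_Ioc_eq_integral_Ioo]
  congr 2
  ext s
  simp only [mem_Ioo, mem_inter_iff, mem_Ioc, mem_Iio]
  constructor
  · rintro ⟨h1, h2⟩; exact ⟨⟨h1, by linarith [ht.2]⟩, h2⟩
  · rintro ⟨⟨h1, _⟩, h2⟩; exact ⟨h1, h2⟩

lemma rlKer_rpow {q α : ℝ} (hq : 0 < q) (t s : ℝ) :
    rlKer α t s ^ q = rlKer ((α - 1) * q + 1) t s := by
  unfold rlKer
  split_ifs with h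
  · rw [← Real.rpow_mul (by linarith), add_sub_cancel_right]
  · rw [Real.zero_rpow hq.ne']

lemma integrable_rlKer {T γ t : ℝ} (hγ : 0 < γ) (ht : t ∈ Icc 0 T) :
    Integrable (rlKer γ t) (volume.restrict (Ioc 0 T)) := by
  have h1 : IntervalIntegrable (fun s : ℝ => (t - s) ^ (γ - 1)) volume 0 t := by
    have := (intervalIntegral.intervalIntegrable_rpow' (a := t) (b := 0)
      (by linarith : -1 < γ - 1)).comp_sub_left t
    simpa using this
  rw [intervalIntegrable_iff_integrableOn_Ioc_of_le ht.1] at h1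
  have : rlKer γ t = (Iio t).indicator fun s => (t - s) ^ (γ - 1) := by
    ext s
    by_cases h : s < t <;> simp [rlKer, h]
  rw [this]
  refine (integrable_indicator_iff measurableSet_Iio).2 ?_
  rw [IntegrableOn, Measure.restrict_restrict measurableSet_Iio]
  exact h1.mono_set fun s hs => ⟨hs.2.1, le_of_lt hs.1⟩

/-- The total mass of the kernel to the right of `c`. -/
lemma integral_rlKer {T γ t c : ℝ} (hγ : 0 < γ) (hct : c ≤ t) (htT : t ≤ T) :
    ∫ s in Ioc c T, rlKer γ t s = (t - c) ^ γ / γ := by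
  have : rlKer γ t = (Iio t).indicator fun s => (t - s) ^ (γ - 1) := by
    ext s
    by_cases h : s < t <;> simp [rlKer, h]
  have h2 : Ioc c T ∩ Iio t = Ioo c t := by
    ext s
    simp only [mem_Ioo, mem_inter_iff, mem_Ioc, mem_Iio]
    constructor
    · rintro ⟨⟨h1, _⟩, h2⟩; exact ⟨h1, h2⟩
    · rintro ⟨h1, h2⟩; exact ⟨⟨h1, by linarith⟩, h2⟩
  rw [this, setIntegral_indicator measurableSet_Iio, h2, ← integral_Ioc_eq_integral_Ioo,
    ← intervalIntegral.integral_of_le hct,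
    intervalIntegral.integral_comp_sub_left (fun x => x ^ (γ - 1)) t,
    integral_rpow (Or.inl (by linarith))]
  simp [Real.zero_rpow hγ.ne']

lemma memLp_rlKer {T q α t : ℝ} (hq : 0 < q) (hγ : 0 < (α - 1) * q + 1) (ht : t ∈ Icc 0 T) :
    MemLp (rlKer α t) (ENNReal.ofReal q) (volume.restrict (Ioc 0 T)) := by
  rw [← integrable_norm_rpow_iff (measurable_rlKer α t).aestronglyMeasurable
    (by simpa using hq) (by simp), ENNReal.toReal_ofReal hq.le]
  simp only [Real.norm_eq_abs, abs_of_nonneg (rlKer_nonneg _ _ _), rlKer_rpow hq]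
  exact integrable_rlKer hγ ht

/-- For `t ≤ t'`, the `L^q` modulus of continuity of the kernel. It rests on
`|a - b|^q ≤ a^q - b^q` for `0 ≤ b ≤ a`, which applies with `a, b` the kernels at `t, t'` for
`s < t` because the kernel `(t - s)^(α - 1)` decreases in `t`. -/
lemma integral_rlKer_sub_rpow_le {T q α t t' : ℝ} (hq : 1 ≤ q) (hα : α ≤ 1)
    (hγ : 0 < (α - 1) * q + 1) (ht : 0 ≤ t) (htt : t ≤ t') (ht' : t' ≤ T) :
    ∫ s in Ioc 0 T, |rlKer α t' s - rlKer α t s| ^ q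
      ≤ 2 * (t' - t) ^ ((α - 1) * q + 1) / ((α - 1) * q + 1) := by
  have hq0 : 0 < q := by linarith
  set γ := (α - 1) * q + 1 with hγd
  have mt : t ∈ Icc 0 T := ⟨ht, by linarith⟩
  have mt' : t' ∈ Icc 0 T := ⟨by linarith, ht'⟩
  have i1 := integrable_rlKer hγ mt
  have i2 := integrable_rlKer hγ mt'
  have i3 : Integrable ((Ici t).indicator (rlKer γ t')) (volume.restrict (Ioc 0 T)) :=
    i2.indicator measurableSet_Ici
  have hpt : ∀ s, |rlKer α t' s - rlKer α t s| ^ q ≤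
      (rlKer γ t s - rlKer γ t' s) + 2 * (Ici t).indicator (rlKer γ t') s := by
    intro s
    rcases lt_or_ge s t with hs | hs
    · have e : (Ici t).indicator (rlKer γ t') s = 0 := indicator_of_notMem (by simpa using hs) _
      rw [e, mul_zero, add_zero, ← rlKer_rpow hq0, ← rlKer_rpow hq0]
      have hle : rlKer α t' s ≤ rlKer α t s := by
        simp only [rlKer, hs, hs.trans_le htt, if_true]
        exact Real.rpow_le_rpow_of_nonpos (by linarith) (by linarith) (by linarith)
      have h0 := rlKer_nonneg α t' s
      rw [abs_sub_comm, abs_of_nonneg (sub_nonneg.2 hle)]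
      have := Real.add_rpow_le_rpow_add (sub_nonneg.2 hle) h0 hq
      rw [sub_add_cancel] at this
      linarith
    · have e : (Ici t).indicator (rlKer γ t') s = rlKer γ t' s := indicator_of_mem hs _
      have z : ∀ b, rlKer b t s = 0 := fun b => by simp [rlKer, hs]
      rw [e, z, z, sub_zero, abs_of_nonneg (rlKer_nonneg _ _ _), rlKer_rpow hq0]
      linarith
  have i12 : Integrable (fun s => rlKer γ t s - rlKer γ t' s) (volume.restrict (Ioc 0 T)) :=
    i1.sub i2
  have hR : ∫ s in Ioc 0 T, (rlKer γ t s - rlKer γ t' s) + 2 * (Ici t).indicator (rlKer γ t') s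
      = t ^ γ / γ - t' ^ γ / γ + 2 * ((t' - t) ^ γ / γ) := by
    rw [integral_add i12 (i3.const_mul 2), integral_sub i1 i2, integral_const_mul,
      integral_rlKer hγ ht mt.2, integral_rlKer hγ mt'.1 ht', sub_zero, sub_zero,
      setIntegral_indicator measurableSet_Ici]
    congr 2
    rw [← integral_rlKer hγ htt ht']
    refine setIntegral_congr_set ?_
    have : (Ici t : Set ℝ) =ᵐ[volume] Ioi t := Ioi_ae_eq_Ici.symm
    refine ((ae_eq_refl (Ioc 0 T : Set ℝ)).inter this).trans (Eq.eventuallyEq ?_)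
    change (Ioc 0 T ∩ Ioi t : Set ℝ) = Ioc t T
    ext s
    simp only [mem_inter_iff, mem_Ioc, mem_Ioi]
    constructor
    · rintro ⟨⟨_, h1⟩, h2⟩; exact ⟨h2, h1⟩
    · rintro ⟨h1, h2⟩; exact ⟨⟨by linarith, h2⟩, h1⟩
  have hmono : t ^ γ ≤ t' ^ γ := Real.rpow_le_rpow ht htt hγ.le
  calc _ ≤ ∫ s in Ioc 0 T, (rlKer γ t s - rlKer γ t' s) + 2 * (Ici t).indicator (rlKer γ t') s :=
        integral_mono_of_nonneg (Eventually.of_forall fun s => by positivity)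
          (i12.add (i3.const_mul 2)) (Eventually.of_forall hpt)
    _ ≤ _ := by
        rw [hR, mul_div_assoc]
        have : t ^ γ / γ ≤ t' ^ γ / γ := by gcongr
        linarith

lemma abs_setIntegral_mul_le {p q T : ℝ} [Fact (1 ≤ ENNReal.ofReal p)] (hpq : p.HolderConjugate q) {k : ℝ → ℝ}
    (hk : MemLp k (ENNReal.ofReal q) (volume.restrict (Ioc 0 T))) (v : LpT p T) :
    |∫ s in Ioc 0 T, k s * (v : ℝ → ℝ) s| ≤
      (∫ s in Ioc 0 T, |k s| ^ q) ^ (1 / q) * ‖v‖ := by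
  have h := integral_mul_norm_le_Lp_mul_Lq hpq.symm hk (Lp.memLp v)
  simp only [Real.norm_eq_abs] at h
  rw [← LpT_norm_rpow hpq.lt v, ← Real.rpow_mul (norm_nonneg _), mul_one_div_cancel hpq.ne_zero,
    Real.rpow_one] at h
  refine (abs_integral_le_integral_abs).trans ?_
  simpa only [abs_mul] using h

lemma rl_exponent_pos {p q α : ℝ} (hpq : p.HolderConjugate q) (hα1 : 1 / p < α) :
    0 < (α - 1) * q + 1 := by
  have hq0 : 0 < q := hpq.symm.pos
  have h1 : 1 / p = 1 - q⁻¹ := by rw [one_div]; linarith [hpq.inv_add_inv_eq_one]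
  have h2 : -q⁻¹ < α - 1 := by linarith
  have := mul_lt_mul_of_pos_right h2 hq0
  rw [neg_mul, inv_mul_cancel₀ hq0.ne'] at this
  linarith

/-- The Hölder estimates behind the compactness of the fractional integral
`L^p([0,T]) → C([0,T])` for `α > 1/p`: boundedness, and a modulus of continuity `ω` that is
uniform on the unit ball. -/
lemma exists_RLint_bounds {T p α : ℝ} [Fact (1 ≤ ENNReal.ofReal p)] (hp : 1 < p) (hα1 : 1 / p < α) (hα2 : α ≤ 1) :
    ∃ C : ℝ, 0 ≤ C ∧ ∃ ω : ℝ → ℝ, Tendsto ω (𝓝 0) (𝓝 0) ∧ ∀ v : LpT p T,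
      (∀ t ∈ Icc 0 T, |RLint α v t| ≤ C * ‖v‖) ∧
      (∀ t ∈ Icc 0 T, ∀ t' ∈ Icc 0 T, |RLint α v t' - RLint α v t| ≤ ω |t' - t| * ‖v‖) := by
  have hpq : p.HolderConjugate (p.conjExponent) := Real.HolderConjugate.conjExponent hp
  set q := p.conjExponent
  have hq0 : 0 < q := hpq.symm.pos
  have hq1 : 1 ≤ q := hpq.symm.lt.le
  have hγ : 0 < (α - 1) * q + 1 := rl_exponent_pos hpq hα1
  set γ := (α - 1) * q + 1 with hγd
  set c := |1 / Real.Gamma α|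
  have hc : 0 ≤ c := abs_nonneg _
  let ω : ℝ → ℝ := fun δ => c * (2 * δ ^ γ / γ) ^ (1 / q)
  have hω : Tendsto ω (𝓝 0) (𝓝 0) := by
    have hcont : Continuous ω := by
      have h1 : Continuous fun δ : ℝ => δ ^ γ := Real.continuous_rpow_const hγ.le
      exact (((h1.const_mul 2).div_const γ).rpow_const fun _ => Or.inr (by positivity)).const_mul c
    have := hcont.tendsto 0
    simpa [ω, Real.zero_rpow hγ.ne', Real.zero_rpow (inv_pos.2 hq0).ne'] using this
  refine ⟨c * (|T| ^ γ / γ) ^ (1 / q), by positivity, ω, hω, fun v => ⟨fun t ht => ?_, ?_⟩⟩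
  · rw [RLint_eq ht, abs_mul, mul_assoc]
    refine mul_le_mul_of_nonneg_left ?_ hc
    refine (abs_setIntegral_mul_le hpq (memLp_rlKer hq0 hγ ht) v).trans ?_
    simp only [abs_of_nonneg (rlKer_nonneg _ _ _), rlKer_rpow hq0]
    rw [integral_rlKer hγ ht.1 ht.2, sub_zero]
    have h0 := ht.1
    have : t ≤ |T| := ht.2.trans (le_abs_self _)
    gcongr
  · have key : ∀ t ∈ Icc 0 T, ∀ t' ∈ Icc 0 T, t ≤ t' →
        |RLint α v t' - RLint α v t| ≤ ω |t' - t| * ‖v‖ := by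
      intro t ht t' ht' htt
      have m1 := memLp_rlKer hq0 hγ ht
      have m2 := memLp_rlKer hq0 hγ ht'
      have hcj : (ENNReal.ofReal q).HolderConjugate (ENNReal.ofReal p) := hpq.symm.ennrealOfReal
      have i1 : Integrable (fun s => rlKer α t s * (v : ℝ → ℝ) s) (volume.restrict (Ioc 0 T)) :=
        m1.integrable_mul (Lp.memLp v)
      have i2 : Integrable (fun s => rlKer α t' s * (v : ℝ → ℝ) s) (volume.restrict (Ioc 0 T)) :=
        m2.integrable_mul (Lp.memLp v)
      rw [RLint_eq ht, RLint_eq ht', ← mul_sub, abs_mul, ← integral_sub i2 i1]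
      simp only [← sub_mul, ω]
      rw [mul_assoc]
      refine mul_le_mul_of_nonneg_left ?_ hc
      refine (abs_setIntegral_mul_le (k := fun s => rlKer α t' s - rlKer α t s) hpq
        (m2.sub m1) v).trans ?_
      rw [abs_of_nonneg (sub_nonneg.2 htt)]
      refine mul_le_mul_of_nonneg_right ?_ (norm_nonneg _)
      refine Real.rpow_le_rpow (integral_nonneg fun s => by positivity) ?_ (by positivity)
      exact integral_rlKer_sub_rpow_le hq1 hα2 hγ ht.1 htt ht'.2
    intro t ht t' ht'
    rcases le_total t t' with h | h
    · exact key t ht t' ht' h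
    · rw [abs_sub_comm, abs_sub_comm t' t]; exact key t' ht' t ht h

lemma RLint_add_smul {T p α : ℝ} (hp : 1 < p) (hα1 : 1 / p < α) [Fact (1 ≤ ENNReal.ofReal p)]
    {t : ℝ} (ht : t ∈ Icc 0 T) (v h : LpT p T) (s : ℝ) :
    RLint α (v + s • h : LpT p T) t = RLint α v t + s * RLint α h t := by
  have hpq : p.HolderConjugate (p.conjExponent) := Real.HolderConjugate.conjExponent hp
  set q := p.conjExponent
  have hq0 : 0 < q := hpq.symm.pos
  have hγ : 0 < (α - 1) * q + 1 := rl_exponent_pos hpq hα1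
  have hcj : (ENNReal.ofReal q).HolderConjugate (ENNReal.ofReal p) := hpq.symm.ennrealOfReal
  have m1 := memLp_rlKer hq0 hγ ht
  have iv : Integrable (fun x => rlKer α t x * (v : ℝ → ℝ) x) (volume.restrict (Ioc 0 T)) :=
    m1.integrable_mul (Lp.memLp v)
  have ih : Integrable (fun x => rlKer α t x * (h : ℝ → ℝ) x) (volume.restrict (Ioc 0 T)) :=
    m1.integrable_mul (Lp.memLp h)
  rw [RLint_eq ht, RLint_eq ht, RLint_eq ht, mul_left_comm, ← mul_add, ← integral_const_mul s,
    ← integral_add iv (ih.const_mul s)]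
  congr 1
  refine integral_congr_ae ?_
  filter_upwards [Lp.coeFn_add v (s • h), Lp.coeFn_smul s h] with x h1 h2
  rw [h1, Pi.add_apply, h2, Pi.smul_apply, smul_eq_mul]
  ring

/-! ### The nonlinear term -/

lemma continuousOn_Fint {T : ℝ} (hT : 0 < T) {f : ℝ → ℝ → ℝ}
    (hf : ContinuousOn (fun q : ℝ × ℝ => f q.1 q.2) (Icc 0 T ×ˢ univ)) :
    ContinuousOn (fun q : ℝ × ℝ => Fint f q.1 q.2) (Icc 0 T ×ˢ univ) := by
  let g : ℝ × ℝ → ℝ → ℝ := fun q s => f (projIcc 0 T hT.le q.1) s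
  have hg : Continuous g.uncurry := by
    have : Continuous fun z : (ℝ × ℝ) × ℝ => (((projIcc 0 T hT.le z.1.1 : Icc 0 T) : ℝ), z.2) := by
      fun_prop
    exact hf.comp_continuous this fun z => ⟨(projIcc 0 T hT.le z.1.1).2, mem_univ _⟩
  have h := intervalIntegral.continuous_parametric_intervalIntegral_of_continuous
    (μ := volume) (a₀ := 0) hg (s := fun q => q.2) continuous_snd
  refine h.continuousOn.congr fun q hq => ?_
  simp only [Fint, g, projIcc_of_mem hT.le hq.1]

lemma continuous_section {T : ℝ} {f : ℝ → ℝ → ℝ}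
    (hf : ContinuousOn (fun q : ℝ × ℝ => f q.1 q.2) (Icc 0 T ×ˢ univ)) {t : ℝ}
    (ht : t ∈ Icc 0 T) : Continuous (f t) :=
  hf.comp_continuous (f := fun s : ℝ => (t, s)) (by fun_prop) fun _ => ⟨ht, mem_univ _⟩

lemma exists_Fint_lipschitz {T : ℝ} {f : ℝ → ℝ → ℝ}
    (hf : ContinuousOn (fun q : ℝ × ℝ => f q.1 q.2) (Icc 0 T ×ˢ univ)) (R : ℝ) :
    ∃ M : ℝ, 0 ≤ M ∧ ∀ t ∈ Icc 0 T, ∀ x y : ℝ, |x| ≤ R → |y| ≤ R →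
      |Fint f t x - Fint f t y| ≤ M * |x - y| := by
  obtain ⟨M, hM⟩ := ((isCompact_Icc (a := (0:ℝ)) (b := T)).prod
    (isCompact_Icc (a := -R) (b := R))).exists_bound_of_continuousOn
    (hf.mono (prod_mono_right (subset_univ _)))
  refine ⟨|M|, abs_nonneg _, fun t ht x y hx hy => ?_⟩
  have hc := continuous_section hf ht
  unfold Fint
  rw [intervalIntegral.integral_interval_sub_left (hc.intervalIntegrable _ _)
    (hc.intervalIntegrable _ _)]
  rw [← Real.norm_eq_abs]
  refine intervalIntegral.norm_integral_le_of_norm_le_const fun s hs => ?_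
  have hs' : s ∈ Icc (-R) R :=
    uIcc_subset_Icc (abs_le.1 hy) (abs_le.1 hx) (uIoc_subset_uIcc hs)
  exact (hM (t, s) ⟨ht, hs'⟩).trans (le_abs_self M)

lemma abs_Fint_le {f : ℝ → ℝ → ℝ} {t b r : ℝ} (hr : 1 < r) (hb : 0 ≤ b)
    (h : ∀ x : ℝ, |f t x| ≤ r * b * |x| ^ (r - 1)) (x : ℝ) :
    |Fint f t x| ≤ r * b * |x| ^ r := by
  have h1 : |Fint f t x| ≤ (r * b * |x| ^ (r - 1)) * |x - 0| := by
    rw [← Real.norm_eq_abs]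
    refine intervalIntegral.norm_integral_le_of_norm_le_const fun s hs => ?_
    refine (h s).trans ?_
    have hs' : |s| ≤ |x| := by
      have := abs_sub_left_of_mem_uIcc (uIoc_subset_uIcc hs)
      simpa using this
    have := Real.rpow_le_rpow (abs_nonneg s) hs' (by linarith : 0 ≤ r - 1)
    exact mul_le_mul_of_nonneg_left this (by positivity)
  refine h1.trans (le_of_eq ?_)
  rw [sub_zero, mul_assoc]
  congr 1
  rcases eq_or_ne x 0 with rfl | hx
  · simp [Real.zero_rpow (by linarith : r ≠ 0)]
  · rw [← Real.rpow_add_one (abs_pos.2 hx).ne', sub_add_cancel]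

/-! ### Coercivity and convexity of the power of the norm -/

lemma bounded_of_rpow_le {p r A K : ℝ} (hr : 0 < r) (hrp : r < p) (hA : 0 ≤ A) (hK : 0 ≤ K) :
    ∃ B : ℝ, ∀ x : ℝ, 0 ≤ x → x ^ p / p ≤ K + A * x ^ r → x ≤ B := by
  have hp : 0 < p := by linarith
  refine ⟨max 1 ((p * (A + K)) ^ (p - r)⁻¹), fun x hx h => ?_⟩
  rcases le_total x 1 with h1 | h1
  · exact h1.trans (le_max_left _ _)
  · refine le_trans ?_ (le_max_right _ _)
    have hx0 : 0 < x := by linarith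
    rw [Real.le_rpow_inv_iff_of_pos hx (by positivity) (by linarith)]
    have hxr : 1 ≤ x ^ r := Real.one_le_rpow h1 hr.le
    have h2 : x ^ p = x ^ (p - r) * x ^ r := by rw [← Real.rpow_add hx0, sub_add_cancel]
    have h3 : x ^ (p - r) * x ^ r ≤ (p * (A + K)) * x ^ r := by
      rw [← h2]
      rw [div_le_iff₀ hp] at h
      nlinarith [mul_nonneg (mul_nonneg hp.le hK) (sub_nonneg.2 hxr)]
    exact le_of_mul_le_mul_right h3 (by linarith)

lemma norm_rpow_convex {E : Type*} [NormedAddCommGroup E] [NormedSpace ℝ E] {p : ℝ} (hp : 1 < p)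
    (v h : E) {s : ℝ} (h0 : 0 ≤ s) (h1 : s ≤ 1) :
    ‖v + s • h‖ ^ p ≤ ‖v‖ ^ p + s * (‖v + h‖ ^ p - ‖v‖ ^ p) := by
  have e : v + s • h = (1 - s) • v + s • (v + h) := by module
  have n : ‖v + s • h‖ ≤ (1 - s) * ‖v‖ + s * ‖v + h‖ := by
    rw [e]
    refine (norm_add_le _ _).trans ?_
    rw [norm_smul, norm_smul, Real.norm_of_nonneg h0, Real.norm_of_nonneg (by linarith)]
  have c := (convexOn_rpow hp.le).2 (norm_nonneg v) (norm_nonneg (v + h))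
    (by linarith : 0 ≤ 1 - s) h0 (by ring)
  have := Real.rpow_le_rpow (norm_nonneg _) n (by linarith : 0 ≤ p)
  simp only [smul_eq_mul] at c
  linarith

/-! ### Compactness and the derivative inequality -/

lemma continuousOn_RLint {T p α : ℝ} [Fact (1 ≤ ENNReal.ofReal p)] (hp : 1 < p)
    (hα1 : 1 / p < α) (hα2 : α ≤ 1) (v : LpT p T) : ContinuousOn (RLint α v) (Icc 0 T) := by
  obtain ⟨C, -, ω, hω, hb⟩ := exists_RLint_bounds (T := T) hp hα1 hα2
  intro t ht
  rw [ContinuousWithinAt, tendsto_iff_dist_tendsto_zero]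
  have h1 : Tendsto (fun t' : ℝ => |t' - t|) (𝓝[Icc 0 T] t) (𝓝 0) := by
    have : Continuous fun t' : ℝ => |t' - t| := by fun_prop
    have := (this.tendsto t).mono_left (nhdsWithin_le_nhds (s := Icc 0 T))
    simpa using this
  have h2 : Tendsto (fun t' : ℝ => ω |t' - t| * ‖v‖) (𝓝[Icc 0 T] t) (𝓝 0) := by
    simpa using (hω.comp h1).mul_const ‖v‖
  refine squeeze_zero' (Eventually.of_forall fun _ => dist_nonneg) ?_ h2
  filter_upwards [self_mem_nhdsWithin] with t' ht'
  exact (hb v).2 t ht t' ht'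

lemma intervalIntegrable_Fint {T p α : ℝ} [Fact (1 ≤ ENNReal.ofReal p)] (hT : 0 < T) (hp : 1 < p)
    (hα1 : 1 / p < α) (hα2 : α ≤ 1) {f : ℝ → ℝ → ℝ}
    (hf : ContinuousOn (fun q : ℝ × ℝ => f q.1 q.2) (Icc 0 T ×ˢ univ)) (v : LpT p T) :
    IntervalIntegrable (fun t => Fint f t (RLint α v t)) volume 0 T := by
  refine ContinuousOn.intervalIntegrable ?_
  rw [uIcc_of_le hT.le]
  exact (continuousOn_Fint hT hf).comp
    (continuousOn_id.prodMk (continuousOn_RLint hp hα1 hα2 v)) fun t ht => ⟨ht, mem_univ _⟩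

lemma JLp_eq {T p : ℝ} (α : ℝ) (hT : 0 < T) (hp : 1 < p) (f : ℝ → ℝ → ℝ) (v : LpT p T) :
    JLp T p α f v = ‖v‖ ^ p / p - ∫ t in (0:ℝ)..T, Fint f t (RLint α v t) := by
  rw [JLp, intervalIntegral.integral_of_le hT.le, ← LpT_norm_rpow hp, one_div_mul_eq_div]

/-- Compactness of the fractional integral: along a subsequence of a bounded sequence in `L^p`,
the fractional integrals are uniformly Cauchy on `[0,T]`. -/
lemma exists_subseq_RLint_cauchy {T p α : ℝ} [Fact (1 ≤ ENNReal.ofReal p)] (hp : 1 < p)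
    (hα1 : 1 / p < α) (hα2 : α ≤ 1) {B : ℝ} (v : ℕ → LpT p T) (hv : ∀ k, ‖v k‖ ≤ B) :
    ∃ φ : ℕ → ℕ, StrictMono φ ∧ ∀ ε > 0, ∃ N, ∀ k ≥ N, ∀ m ≥ N, ∀ t ∈ Icc 0 T,
      |RLint α (v (φ k)) t - RLint α (v (φ m)) t| ≤ ε := by
  obtain ⟨C, hC, ω, hω, hb⟩ := exists_RLint_bounds (T := T) hp hα1 hα2
  have hB : 0 ≤ B := (norm_nonneg _).trans (hv 0)
  let u : ℕ → BoundedContinuousFunction (Icc 0 T) ℝ := fun k =>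
    BoundedContinuousFunction.mkOfCompact
      ⟨fun t => RLint α (v k) t, (continuousOn_RLint hp hα1 hα2 (v k)).domRestrict⟩
  have hcpt : IsCompact (closure (range u)) := by
    refine BoundedContinuousFunction.arzela_ascoli (Icc (-(C * B)) (C * B)) isCompact_Icc _ ?_ ?_
    · rintro _ t ⟨k, rfl⟩
      refine abs_le.1 (((hb (v k)).1 t t.2).trans ?_)
      gcongr
      exact hv k
    · intro t
      rw [Metric.equicontinuousAt_iff]
      intro ε hε
      have h1 : Tendsto (fun δ => ω δ * B) (𝓝 0) (𝓝 0) := by simpa using hω.mul_const B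
      obtain ⟨δ, hδ, hδε⟩ := Metric.tendsto_nhds_nhds.1 h1 ε hε
      refine ⟨δ, hδ, ?_⟩
      rintro t' htt ⟨_, k, rfl⟩
      have h2 := hδε (x := |(t' : ℝ) - t|) (by simpa [Subtype.dist_eq, Real.dist_eq] using htt)
      rw [Real.dist_eq, sub_zero] at h2
      rw [dist_comm]
      refine lt_of_le_of_lt ?_ h2
      refine ((hb (v k)).2 t t.2 t' t'.2).trans ?_
      rw [abs_mul, abs_of_nonneg hB]
      exact mul_le_mul (le_abs_self _) (hv k) (norm_nonneg _) (abs_nonneg _)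
  obtain ⟨w, -, φ, hφ, hlim⟩ := hcpt.tendsto_subseq fun k => subset_closure (mem_range_self k)
  refine ⟨φ, hφ, fun ε hε => ?_⟩
  obtain ⟨N, hN⟩ := Metric.cauchySeq_iff.1 hlim.cauchySeq ε hε
  refine ⟨N, fun k hk m hm t ht => ?_⟩
  exact (BoundedContinuousFunction.dist_coe_le_dist (f := u (φ k)) (g := u (φ m))
    ⟨t, ht⟩).trans (hN k hk m hm).le

/-- The one-sided inequality that replaces a formula for the derivative of `J`: as the power of
the norm is convex and the nonlinear part is Lipschitz along the fractional integrals, the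
derivative of `J` at `v` bounds the increment of `‖·‖^p / p` from below. -/
lemma fderiv_le_norm_rpow_sub {T p α : ℝ} [Fact (1 ≤ ENNReal.ofReal p)] (hT : 0 < T) (hp : 1 < p)
    (hα1 : 1 / p < α) (hα2 : α ≤ 1) {f : ℝ → ℝ → ℝ}
    (hf : ContinuousOn (fun q : ℝ × ℝ => f q.1 q.2) (Icc 0 T ×ˢ univ)) {R M D : ℝ}
    (hM : 0 ≤ M) (hL : ∀ t ∈ Icc 0 T, ∀ x y : ℝ, |x| ≤ R → |y| ≤ R →
      |Fint f t x - Fint f t y| ≤ M * |x - y|)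
    (v h : LpT p T) (hR : ∀ s ∈ Icc (0:ℝ) 1, ∀ t ∈ Icc 0 T,
      |RLint α (v + s • h : LpT p T) t| ≤ R)
    (hD : ∀ t ∈ Icc 0 T, |RLint α h t| ≤ D) {J' : LpT p T →L[ℝ] ℝ}
    (hJ : HasFDerivAt (JLp T p α f) J' v) :
    J' h ≤ (‖v + h‖ ^ p - ‖v‖ ^ p) / p + M * D * T := by
  have hp0 : 0 < p := by linarith
  refine le_of_tendsto (hJ.hasLineDerivAt h).tendsto_slope_zero_right ?_
  filter_upwards [Ioc_mem_nhdsGT (zero_lt_one' ℝ)] with s hs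
  have hG : |(∫ t in (0:ℝ)..T, Fint f t (RLint α (v + s • h : LpT p T) t)) -
      ∫ t in (0:ℝ)..T, Fint f t (RLint α v t)| ≤ (M * (s * D)) * |T - 0| := by
    rw [← intervalIntegral.integral_sub (intervalIntegrable_Fint hT hp hα1 hα2 hf _)
      (intervalIntegrable_Fint hT hp hα1 hα2 hf _)]
    rw [← Real.norm_eq_abs]
    refine intervalIntegral.norm_integral_le_of_norm_le_const fun t ht => ?_
    rw [uIoc_of_le hT.le] at ht
    have ht' : t ∈ Icc 0 T := Ioc_subset_Icc_self ht
    have hv := hR 0 (by simp) t ht'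
    rw [zero_smul, add_zero] at hv
    refine (hL t ht' _ _ (hR s ⟨hs.1.le, hs.2⟩ t ht') hv).trans ?_
    rw [RLint_add_smul hp hα1 ht', add_sub_cancel_left, abs_mul, abs_of_pos hs.1]
    gcongr
    · exact hs.1.le
    · exact hD t ht'
  rw [sub_zero, abs_of_pos hT] at hG
  have hc := norm_rpow_convex hp v h hs.1.le hs.2
  rw [JLp_eq α hT hp, JLp_eq α hT hp, smul_eq_mul, inv_mul_le_iff₀ hs.1]
  have h1 : ‖v + s • h‖ ^ p / p ≤ ‖v‖ ^ p / p + s * ((‖v + h‖ ^ p - ‖v‖ ^ p) / p) := by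
    rw [mul_div_assoc', ← add_div]
    gcongr
  have h2 := (abs_le.1 hG).1
  linarith

/-! ### The Palais–Smale condition -/

theorem energy_palaisSmale
    (T p α : ℝ) (hT : 0 < T) (hp : 1 < p) (hα1 : 1 / p < α) (hα2 : α ≤ 1)
    (f : ℝ → ℝ → ℝ)
    (hf : ContinuousOn (fun q : ℝ × ℝ => f q.1 q.2) (Set.Icc 0 T ×ˢ Set.univ))
    (r1 : ℝ) (hr11 : 1 < r1) (hr1p : r1 < p)
    (a : ℝ → ℝ) (ha0 : ∀ t ∈ Set.Icc 0 T, 0 ≤ a t)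
    (haint : IntegrableOn a (Set.Icc 0 T))
    (hH1 : ∀ t ∈ Set.Icc 0 T, ∀ x : ℝ, |f t x| ≤ r1 * a t * |x| ^ (r1 - 1))
    [Fact (1 ≤ ENNReal.ofReal p)] :
    ∀ (vk : ℕ → LpT p T) (J' : ℕ → (LpT p T →L[ℝ] ℝ)),
      (∀ k : ℕ, HasFDerivAt (JLp T p α f) (J' k) (vk k)) →
      (∃ K : ℝ, ∀ k : ℕ, |JLp T p α f (vk k)| ≤ K) →
      Tendsto (fun k : ℕ => ‖J' k‖) atTop (𝓝 0) →
      ∃ (u : LpT p T) (φ : ℕ → ℕ), StrictMono φ ∧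
        Tendsto (fun k : ℕ => vk (φ k)) atTop (𝓝 u) := by
  rintro vk J' hJ ⟨K, hK⟩ hJ0
  have hp0 : 0 < p := by linarith
  obtain ⟨C, hC, _, -, hb⟩ := exists_RLint_bounds (T := T) hp hα1 hα2
  have hK0 : 0 ≤ K := (abs_nonneg _).trans (hK 0)
  -- Coercivity: the nonlinear term grows like `‖v‖ ^ r1` with `r1 < p`.
  have ha : IntervalIntegrable a volume 0 T :=
    (intervalIntegrable_iff_integrableOn_Icc_of_le hT.le).2 haint
  have hG : ∀ v : LpT p T, |∫ t in (0:ℝ)..T, Fint f t (RLint α v t)| ≤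
      (r1 * C ^ r1 * ∫ t in (0:ℝ)..T, a t) * ‖v‖ ^ r1 := by
    intro v
    have e : (r1 * C ^ r1 * ∫ t in (0:ℝ)..T, a t) * ‖v‖ ^ r1 =
        ∫ t in (0:ℝ)..T, (r1 * (C * ‖v‖) ^ r1) * a t := by
      rw [intervalIntegral.integral_const_mul, Real.mul_rpow hC (norm_nonneg _)]
      ring
    rw [e]
    rw [← Real.norm_eq_abs]
    refine intervalIntegral.norm_integral_le_of_norm_le hT.le ?_ (ha.const_mul _)
    refine Eventually.of_forall fun t ht => ?_
    have ht' : t ∈ Icc 0 T := Ioc_subset_Icc_self ht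
    refine (abs_Fint_le hr11 (ha0 t ht') (hH1 t ht') _).trans ?_
    rw [mul_right_comm]
    have := ha0 t ht'
    gcongr
    exact (hb v).1 t ht'
  have hA : 0 ≤ r1 * C ^ r1 * ∫ t in (0:ℝ)..T, a t :=
    mul_nonneg (by positivity) (intervalIntegral.integral_nonneg hT.le ha0)
  obtain ⟨B, hB⟩ := bounded_of_rpow_le (p := p) (by linarith : 0 < r1) hr1p hA hK0
  have hvB : ∀ k, ‖vk k‖ ≤ B := by
    intro k
    refine hB _ (norm_nonneg _) ?_
    have h1 := hK k
    rw [JLp_eq α hT hp] at h1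
    linarith [(abs_le.1 h1).2, (abs_le.1 (hG (vk k))).2]
  have hB0 : 0 ≤ B := (norm_nonneg _).trans (hvB 0)
  obtain ⟨φ, hφ, hcau⟩ := exists_subseq_RLint_cauchy hp hα1 hα2 vk hvB
  obtain ⟨M, hM, hL⟩ := exists_Fint_lipschitz hf (C * B)
  -- Lower bound for `‖·‖ ^ p` at the midpoint of `vk i` and `vk j`.
  have hmid : ∀ i j : ℕ, ∀ D : ℝ, (∀ t ∈ Icc 0 T, |RLint α (vk i) t - RLint α (vk j) t| ≤ D) →
      ‖vk i‖ ^ p - ‖(2⁻¹ : ℝ) • (vk i + vk j)‖ ^ p ≤ p * (‖J' i‖ * B + M * D * T) := by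
    intro i j D hD
    set h : LpT p T := (2⁻¹ : ℝ) • (vk j - vk i) with hh
    have hsum : vk i + h = (2⁻¹ : ℝ) • (vk i + vk j) := by rw [hh]; module
    have hD0 : 0 ≤ D := (abs_nonneg _).trans (hD 0 ⟨le_rfl, hT.le⟩)
    have hnorm : ‖h‖ ≤ B := by
      rw [hh, norm_smul, Real.norm_of_nonneg (by norm_num)]
      linarith [norm_sub_le (vk j) (vk i), hvB i, hvB j]
    have hRL : ∀ t ∈ Icc 0 T, |RLint α h t| ≤ D := by
      intro t ht
      have e : vk j = vk i + (2:ℝ) • h := by rw [hh]; module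
      have h1 := hD t ht
      rw [e, RLint_add_smul hp hα1 ht, sub_add_cancel_left, abs_neg, abs_mul, abs_two] at h1
      linarith [abs_nonneg (RLint α h t)]
    have key := fderiv_le_norm_rpow_sub hT hp hα1 hα2 hf hM hL (vk i) h (fun s hs t ht => by
      refine ((hb _).1 t ht).trans ?_
      gcongr
      have e : vk i + s • h = (1 - s / 2) • vk i + (s / 2) • vk j := by rw [hh]; module
      rw [e]
      refine (norm_add_le _ _).trans ?_
      rw [norm_smul, norm_smul, Real.norm_of_nonneg (by linarith [hs.2]),
        Real.norm_of_nonneg (by linarith [hs.1])]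
      nlinarith [hvB i, hvB j, hs.1, hs.2]) hRL (hJ i)
    rw [hsum] at key
    have h2 : -(‖J' i‖ * B) ≤ J' i h := by
      have := (J' i).le_opNorm h
      rw [Real.norm_eq_abs] at this
      have h3 : ‖J' i‖ * ‖h‖ ≤ ‖J' i‖ * B := by gcongr
      linarith [(abs_le.1 this).1]
    have h4 : (‖vk i‖ ^ p - ‖(2⁻¹ : ℝ) • (vk i + vk j)‖ ^ p) / p ≤ ‖J' i‖ * B + M * D * T := by
      rw [sub_div] at key ⊢
      linarith
    rwa [div_le_iff₀' hp0] at h4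
  have hCauchy : CauchySeq fun k => vk (φ k) := by
    rw [Metric.cauchySeq_iff]
    intro ε hε
    have hεp : 0 < ε ^ p := Real.rpow_pos_of_pos hε p
    set ε1 := ε ^ p / (2 * (2 * B ^ p + 1)) with hε1
    have hBp : 0 ≤ B ^ p := Real.rpow_nonneg hB0 p
    have hε1p : 0 < ε1 := by positivity
    obtain ⟨C1, hC1, hU⟩ := LpT_norm_sub_rpow_le (T := T) hp hε1p
    -- `η` is small enough for `C1 * p * (η * B + M * η * T) < ε ^ p / 2`.
    set S := C1 * p * (B + M * T) with hS
    have hS0 : 0 ≤ S := by positivity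
    set η := ε ^ p / (2 * (S + 1)) with hη
    have hη0 : 0 < η := by positivity
    obtain ⟨N1, hN1⟩ := hcau η hη0
    obtain ⟨N2, hN2⟩ := eventually_atTop.1
      ((hJ0.comp hφ.tendsto_atTop).eventually (gt_mem_nhds hη0))
    refine ⟨max N1 N2, fun k hk m hm => ?_⟩
    have k1 := hN1 k (le_of_max_le_left hk) m (le_of_max_le_left hm)
    have k2 := hN1 m (le_of_max_le_left hm) k (le_of_max_le_left hk)
    have j1 : ‖J' (φ k)‖ ≤ η := (hN2 k (le_of_max_le_right hk)).le
    have j2 : ‖J' (φ m)‖ ≤ η := (hN2 m (le_of_max_le_right hm)).le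
    have g1 := hmid _ _ η k1
    have g2 := hmid _ _ η k2
    rw [add_comm (vk (φ m))] at g2
    have f1 : p * (‖J' (φ k)‖ * B + M * η * T) ≤ p * (η * B + M * η * T) := by gcongr
    have f2 : p * (‖J' (φ m)‖ * B + M * η * T) ≤ p * (η * B + M * η * T) := by gcongr
    have g3 : (‖vk (φ k)‖ ^ p + ‖vk (φ m)‖ ^ p) / 2 -
        ‖(2⁻¹ : ℝ) • (vk (φ k) + vk (φ m))‖ ^ p ≤ p * (η * B + M * η * T) := by linarith
    have u := hU (vk (φ k)) (vk (φ m))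
    have b1 : ‖vk (φ k)‖ ^ p ≤ B ^ p := Real.rpow_le_rpow (norm_nonneg _) (hvB _) hp0.le
    have b2 : ‖vk (φ m)‖ ^ p ≤ B ^ p := Real.rpow_le_rpow (norm_nonneg _) (hvB _) hp0.le
    have e1 : ε1 * (‖vk (φ k)‖ ^ p + ‖vk (φ m)‖ ^ p) < ε ^ p / 2 := by
      have : ε1 * (2 * B ^ p + 1) = ε ^ p / 2 := by rw [hε1]; field_simp
      nlinarith
    have e2 : C1 * ((‖vk (φ k)‖ ^ p + ‖vk (φ m)‖ ^ p) / 2 -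
        ‖(2⁻¹ : ℝ) • (vk (φ k) + vk (φ m))‖ ^ p) ≤ ε ^ p / 2 := by
      refine (mul_le_mul_of_nonneg_left g3 hC1).trans ?_
      have t1 : C1 * (p * (η * B + M * η * T)) = η * S := by rw [hS]; ring
      have t2 : η * (S + 1) = ε ^ p / 2 := by rw [hη]; field_simp
      rw [t1]; nlinarith
    have : ‖vk (φ k) - vk (φ m)‖ ^ p < ε ^ p := by linarith
    rw [dist_eq_norm]
    exact (Real.rpow_lt_rpow_iff (norm_nonneg _) hε.le hp0).1 this
  obtain ⟨u, hu⟩ := cauchySeq_tendsto_of_complete hCauchy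
  exact ⟨u, φ, hφ, hu⟩
end

section
/- Let T>0, p>1, α ∈ (1/p,1], and let f:[0,T]×ℝ→ℝ be continuous and satisfy (H1). Then the energy functional J: L^p([0,T],ℝ) → ℝ defined by J(v) = (1/p)∫_0^T |v(t)|^p dt − ∫_0^T F(t,(_0I_t^α v)(t)) dt is continuously Fréchet differentiable, and its derivative is given by DJ(v)(w) = ∫_0^T |v(t)|^{p−2} v(t) w(t) dt − ∫_0^T f(t,(_0I_t^α v)(t)) (_0I_t^α w)(t) dt for all v, w ∈ L^p([0,T],ℝ). -/
/-!
The functional is a difference of two terms, each of which is `C¹` separately.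

* Power term (`powerEnergy_hasFDerivAt`). With `φ x = |x| ^ (p - 2) * x`, the Nemytskii operator
  `v ↦ φ ∘ v` is continuous from `L^p` to the conjugate space `L^q` by Vitali's theorem, so the
  candidate derivative `v ↦ ∫ φ(v) ·` is continuous. Convexity of `|x| ^ p / p` bounds the
  first-order remainder by the increment of this candidate, so it is the derivative.
* Potential term (`nemytskii_primitive`). Since `α > 1 / p`, Hölder's inequality makes evaluation
  of the fractional integral at `t` a functional on `L^p` bounded uniformly in `t`
  (`exists_RLint_clm`). Hence the fractional integrals of an `L^p`-ball take values in a compact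
  interval, where `f` is uniformly continuous, and both differentiability and continuity of the
  derivative follow from uniform estimates.
-/

open MeasureTheory Set Filter Topology

/-! ### The power term -/

theorem abs_signedPow {p : ℝ} (hp : 1 < p) (x : ℝ) :
    |(|x| ^ (p - 2) * x)| = |x| ^ (p - 1) := by
  rcases eq_or_ne x 0 with rfl | hx
  · simp [Real.zero_rpow (by linarith : p - 1 ≠ 0)]
  · rw [abs_mul, abs_of_nonneg (Real.rpow_nonneg (abs_nonneg x) _),
      show p - 1 = (p - 2) + 1 by ring, Real.rpow_add_one (abs_ne_zero.2 hx)]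

theorem continuous_signedPow {p : ℝ} (hp : 1 < p) :
    Continuous fun x : ℝ => |x| ^ (p - 2) * x := by
  have h : Continuous (deriv fun x : ℝ => |x| ^ p) := by
    have := (contDiff_norm_rpow (E := ℝ) hp).continuous_deriv_one
    simpa using this
  have h2 : (fun x : ℝ => |x| ^ (p - 2) * x) = fun x => p⁻¹ * deriv (fun x : ℝ => |x| ^ p) x := by
    ext x
    rw [(hasDerivAt_abs_rpow x hp).deriv]
    field_simp
  rw [h2]
  fun_prop

/-- The tangent line inequality for the convex function `|x| ^ p / p`, obtained from Young's
inequality for `z` and `|x| ^ (p - 2) * x`. -/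
theorem abs_rpow_gradient_ineq {p : ℝ} (hp : 1 < p) (x z : ℝ) :
    |x| ^ p / p + |x| ^ (p - 2) * x * (z - x) ≤ |z| ^ p / p := by
  have hpq := Real.HolderConjugate.conjExponent hp
  have hy := Real.young_inequality z (|x| ^ (p - 2) * x) hpq
  have h1 : |(|x| ^ (p - 2) * x)| ^ p.conjExponent = |x| ^ p := by
    rw [abs_signedPow hp, ← Real.rpow_mul (abs_nonneg x)]
    congr 1
    rw [Real.conjExponent]
    field_simp [(by linarith : p - 1 ≠ 0)]
  have h2 : |x| ^ (p - 2) * x * x = |x| ^ p := by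
    rcases eq_or_ne x 0 with rfl | hx
    · simp [Real.zero_rpow (by linarith : p ≠ 0)]
    · rw [mul_assoc, ← abs_mul_abs_self x, ← mul_assoc, ← Real.rpow_add_one (abs_ne_zero.2 hx),
        ← Real.rpow_add_one (abs_ne_zero.2 hx)]
      congr 1; ring
  have h3 : |x| ^ p / p.conjExponent = |x| ^ p - |x| ^ p / p := by
    have := hpq.inv_add_inv_eq_one
    rw [div_eq_mul_inv, div_eq_mul_inv, eq_sub_iff_add_eq'.2 this]
    ring
  rw [h1, h3] at hy
  nlinarith

/-- On a finite measure space, `v ↦ (1 / p) * ∫ |v| ^ p` is continuously differentiable on `L^p`. -/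
theorem powerEnergy_hasFDerivAt {Ω : Type*} [MeasurableSpace Ω] {μ : Measure Ω}
    [IsFiniteMeasure μ] {p : ℝ} (hp : 1 < p) [Fact (1 ≤ ENNReal.ofReal p)] :
    ∃ D : Lp ℝ (ENNReal.ofReal p) μ → Lp ℝ (ENNReal.ofReal p) μ →L[ℝ] ℝ, Continuous D ∧ ∀ v,
      HasFDerivAt (fun v : Lp ℝ (ENNReal.ofReal p) μ => (1 / p) * ∫ t, |v t| ^ p ∂μ) (D v) v ∧
      ∀ w, D v w = ∫ t, |v t| ^ (p - 2) * v t * w t ∂μ := by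
  set q := p.conjExponent with hq
  have hpq : p.HolderConjugate q := Real.HolderConjugate.conjExponent hp
  have : ENNReal.HolderConjugate (ENNReal.ofReal q) (ENNReal.ofReal p) :=
    hpq.symm.ennrealOfReal
  have : Fact (1 ≤ ENNReal.ofReal q) := ⟨by simpa using hpq.symm.lt.le⟩
  let φ : ℝ → ℝ := fun x => |x| ^ (p - 2) * x
  have hφc : Continuous φ := continuous_signedPow hp
  have hmul : ENNReal.ofReal q * ENNReal.ofReal (p - 1) = ENNReal.ofReal p := by
    rw [← ENNReal.ofReal_mul hpq.symm.pos.le]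
    congr 1
    rw [hq, Real.conjExponent]
    field_simp [(by linarith : p - 1 ≠ 0)]
  have hφn : ∀ u : Ω → ℝ, eLpNorm (fun t => φ (u t)) (ENNReal.ofReal q) μ
      = eLpNorm u (ENNReal.ofReal p) μ ^ (p - 1) := by
    intro u
    rw [← hmul, ← eLpNorm_norm_rpow u (by linarith)]
    refine eLpNorm_congr_norm_ae (Eventually.of_forall fun t => ?_)
    simp only [φ, Real.norm_eq_abs]
    rw [abs_signedPow hp, abs_of_nonneg (Real.rpow_nonneg (abs_nonneg _) _)]
  have hφL : ∀ v : Lp ℝ (ENNReal.ofReal p) μ,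
      MemLp (fun t => φ (v t)) (ENNReal.ofReal q) μ := by
    intro v
    refine ⟨hφc.comp_aestronglyMeasurable (Lp.aestronglyMeasurable v), ?_⟩
    rw [hφn]
    exact ENNReal.rpow_lt_top_of_nonneg (by linarith) (Lp.eLpNorm_ne_top v)
  let N : Lp ℝ (ENNReal.ofReal p) μ → Lp ℝ (ENNReal.ofReal q) μ := fun v => (hφL v).toLp
  have hN : Continuous N := by
    -- Vitali: every subsequence has a further subsequence converging a.e., and
    -- `‖φ ∘ u‖_q = ‖u‖_p ^ (p - 1)` transfers uniform integrability from `u` to `φ ∘ u`.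
    rw [continuous_iff_seqContinuous]
    intro u v huv
    refine tendsto_of_subseq_tendsto fun ns hns => ?_
    have hsub : Tendsto (fun n => u (ns n)) atTop (𝓝 v) := huv.comp hns
    obtain ⟨ms, hms, hae⟩ := (tendstoInMeasure_of_tendsto_Lp hsub).exists_seq_tendsto_ae
    refine ⟨ms, ?_⟩
    have hsub2 : Tendsto (fun n => u (ns (ms n))) atTop (𝓝 v) := hsub.comp hms.tendsto_atTop
    refine (Lp.tendsto_Lp_iff_tendsto_eLpNorm'' _ (fun n => hφL (u (ns (ms n)))) _ (hφL v)).2 ?_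
    refine tendsto_Lp_finite_of_tendsto_ae Fact.out ENNReal.ofReal_ne_top
      (fun n => (hφL _).1) (hφL v) ?_ ?_
    · have hui := unifIntegrable_of_tendsto_Lp (Fact.out : 1 ≤ ENNReal.ofReal p)
        ENNReal.ofReal_ne_top (fun n => Lp.memLp (u (ns (ms n)))) (Lp.memLp v)
        ((Lp.tendsto_Lp_iff_tendsto_eLpNorm' _ _).1 hsub2)
      intro ε hε
      obtain ⟨δ, hδ, h⟩ := hui (ε := ε ^ (p - 1)⁻¹) (Real.rpow_pos_of_pos hε _)
      refine ⟨δ, hδ, fun n s hs hμs => ?_⟩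
      have hind : s.indicator (fun t => φ (u (ns (ms n)) t))
          = fun t => φ (s.indicator (u (ns (ms n))) t) := by
        ext t
        by_cases ht : t ∈ s <;> simp [ht, φ]
      rw [hind, hφn]
      refine (ENNReal.rpow_le_rpow (h n s hs hμs) (by linarith)).trans_eq ?_
      rw [ENNReal.ofReal_rpow_of_nonneg (by positivity) (by linarith),
        ← Real.rpow_mul hε.le, inv_mul_cancel₀ (by linarith), Real.rpow_one]
    · filter_upwards [hae] with t ht
      exact (hφc.tendsto _).comp ht
  let P := (ContinuousLinearMap.mul ℝ ℝ).lpPairing μ (ENNReal.ofReal q) (ENNReal.ofReal p)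
  have hP : ∀ v w, P (N v) w = ∫ t, φ (v t) * w t ∂μ := by
    intro v w
    simp only [P]
    rw [ContinuousLinearMap.lpPairing_eq_integral]
    refine integral_congr_ae ?_
    filter_upwards [(hφL v).coeFn_toLp] with s hs
    simp [N, hs]
  have hDc : Continuous fun v => P (N v) := P.continuous.comp hN
  refine ⟨fun v => P (N v), hDc, fun v => ⟨?_, hP v⟩⟩
  have hpint : ∀ v : Lp ℝ (ENNReal.ofReal p) μ, Integrable (fun t => |v t| ^ p) μ := by
    intro v
    have := (Lp.memLp v).integrable_norm_rpow (by simpa using by linarith) (by simp)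
    simpa [ENNReal.toReal_ofReal (by linarith : 0 ≤ p)] using this
  have hφint : ∀ v w : Lp ℝ (ENNReal.ofReal p) μ, Integrable (fun t => φ (v t) * w t) μ :=
    fun v w => (hφL v).integrable_mul (Lp.memLp w)
  have hgrad : ∀ v w : Lp ℝ (ENNReal.ofReal p) μ,
      (1 / p) * ∫ t, |v t| ^ p ∂μ + P (N v) (w - v) ≤ (1 / p) * ∫ t, |w t| ^ p ∂μ := by
    intro v w
    rw [hP, ← integral_const_mul, ← integral_const_mul,
      ← integral_add ((hpint v).const_mul _) (hφint v _)]
    refine integral_mono_ae (((hpint v).const_mul _).add (hφint v _)) ((hpint w).const_mul _) ?_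
    filter_upwards [Lp.coeFn_sub w v] with t ht
    have := abs_rpow_gradient_ineq hp (v t) (w t)
    simp only [ht, Pi.sub_apply, φ]
    rw [one_div_mul_eq_div, one_div_mul_eq_div]
    exact this
  -- `hgrad` at the pairs `(v, v + w)` and `(v + w, v)` places the remainder between `0` and
  -- `(D (v + w) - D v) w`, so continuity of the derivative already gives differentiability.
  rw [hasFDerivAt_iff_isLittleO_nhds_zero, Asymptotics.isLittleO_iff]
  intro ε hε
  obtain ⟨δ, hδ, h⟩ := Metric.continuousAt_iff.1 (hDc.continuousAt (x := v)) ε hε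
  filter_upwards [Metric.ball_mem_nhds (0 : Lp ℝ (ENNReal.ofReal p) μ) hδ] with w hw
  rw [mem_ball_zero_iff] at hw
  have h1 := hgrad v (v + w)
  have h2 := hgrad (v + w) v
  have h3 := h (x := v + w) (by simpa [dist_eq_norm] using hw)
  rw [dist_eq_norm] at h3
  have h4 := (P (N (v + w)) - P (N v)).le_of_opNorm_le h3.le w
  rw [sub_apply] at h4
  have h5 := le_of_abs_le h4
  rw [add_sub_cancel_left] at h1
  rw [sub_add_cancel_left, map_neg] at h2
  rw [Real.norm_eq_abs, abs_of_nonneg (by linarith)]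
  linarith

/-! ### The fractional integral as a family of functionals -/

/-- For `α > 1 / p`, evaluating the fractional integral at `t` is a bounded linear functional
on `L^p`, with norm bounded uniformly in `t`: it is the pairing with a translate of a kernel
lying in the conjugate space `L^q`. -/
theorem exists_RLint_clm {T p α : ℝ} (hp : 1 < p) (hα1 : 1 / p < α)
    [Fact (1 ≤ ENNReal.ofReal p)] :
    ∃ C > 0, ∃ κ : ℝ → LpT p T →L[ℝ] ℝ, (∀ t, ‖κ t‖ ≤ C) ∧
      (∀ w, StronglyMeasurable fun t => κ t w) ∧
      ∀ t ∈ Ioc 0 T, ∀ w : LpT p T, κ t w = RLint α (w : ℝ → ℝ) t := by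
  set μ : Measure ℝ := volume.restrict (Ioc 0 T) with hμ
  set q := p.conjExponent with hq
  have hpq : p.HolderConjugate q := Real.HolderConjugate.conjExponent hp
  have : ENNReal.HolderConjugate (ENNReal.ofReal q) (ENNReal.ofReal p) :=
    hpq.symm.ennrealOfReal
  have : Fact (1 ≤ ENNReal.ofReal q) := ⟨by simpa using hpq.symm.lt.le⟩
  -- For `t, s` in `(0, T]`, `h (t - s)` is `(t - s) ^ (α - 1)` when `s ≤ t` and `0` otherwise;
  -- `α > 1 / p` is what puts `h` in `L^q`.
  let h : ℝ → ℝ := (Ico 0 T).indicator fun s => s ^ (α - 1)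
  have hhm : Measurable h := Measurable.indicator (by fun_prop) measurableSet_Ico
  have hexp : -1 < (α - 1) * q := by
    have hq0 := hpq.symm.pos
    have h1 : 1 / p * q = q - 1 := by
      have := hpq.inv_add_inv_eq_one
      have hp0 := hpq.pos
      field_simp at this ⊢
      linarith
    have h2 : 1 / p * q < α * q := by gcongr
    linarith
  have hhL : MemLp h (ENNReal.ofReal q) volume := by
    rw [← integrable_norm_rpow_iff hhm.aestronglyMeasurable
      (by simpa using hpq.symm.pos) (by simp), ENNReal.toReal_ofReal hpq.symm.pos.le]
    have : (fun x => ‖h x‖ ^ q) = (Ico 0 T).indicator fun s => s ^ ((α - 1) * q) := by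
      ext x
      by_cases hx : x ∈ Ico 0 T
      · simp only [h, indicator_of_mem hx]
        rw [Real.norm_of_nonneg (Real.rpow_nonneg hx.1 _), ← Real.rpow_mul hx.1]
      · simp [h, indicator_of_notMem hx, hpq.symm.pos.ne']
    rw [this, integrable_indicator_iff measurableSet_Ico]
    rcases le_or_gt T 0 with hT | hT
    · simp [Ico_eq_empty (not_lt.2 hT)]
    · exact (intervalIntegrable_iff_integrableOn_Ico_of_le hT.le).1
        (intervalIntegral.intervalIntegrable_rpow' hexp)
  have hcomp : ∀ t, MemLp (fun s => h (t - s)) (ENNReal.ofReal q) μ := fun t =>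
    (hhL.comp_measurePreserving (volume.measurePreserving_sub_left t)).restrict _
  have hnorm : ∀ t, ‖(hcomp t).toLp‖ ≤ (eLpNorm h (ENNReal.ofReal q) volume).toReal := by
    intro t
    rw [Lp.norm_toLp]
    refine ENNReal.toReal_mono hhL.2.ne ?_
    calc eLpNorm (fun s => h (t - s)) (ENNReal.ofReal q) μ
        ≤ eLpNorm (h ∘ fun s => t - s) (ENNReal.ofReal q) volume :=
          eLpNorm_mono_measure _ Measure.restrict_le_self
      _ = _ := eLpNorm_comp_measurePreserving hhL.1 (volume.measurePreserving_sub_left t)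
  let P := (ContinuousLinearMap.mul ℝ ℝ).lpPairing μ (ENNReal.ofReal q) (ENNReal.ofReal p)
  let κ : ℝ → LpT p T →L[ℝ] ℝ := fun t => (1 / Real.Gamma α) • P (hcomp t).toLp
  have hκ : ∀ t w, κ t w = (1 / Real.Gamma α) * ∫ s, h (t - s) * w s ∂μ := by
    intro t w
    simp only [κ, P, smul_apply, smul_eq_mul]
    rw [ContinuousLinearMap.lpPairing_eq_integral]
    congr 1
    refine integral_congr_ae ?_
    filter_upwards [(hcomp t).coeFn_toLp] with s hs
    simp [hs]
  refine ⟨|1 / Real.Gamma α| * (‖P‖ * (eLpNorm h (ENNReal.ofReal q) volume).toReal) + 1,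
    by positivity, κ, fun t => ?_, fun w => ?_, fun t ht w => ?_⟩
  · refine le_trans ?_ (le_add_of_nonneg_right zero_le_one)
    simp only [κ]
    rw [norm_smul, Real.norm_eq_abs]
    gcongr
    exact (P.le_opNorm _).trans (by gcongr; exact hnorm t)
  · simp only [hκ]
    refine StronglyMeasurable.const_mul ?_ _
    have hm : StronglyMeasurable (Function.uncurry fun t s : ℝ => h (t - s) * w s) := by
      refine StronglyMeasurable.mul ?_ ((Lp.stronglyMeasurable w).comp_measurable measurable_snd)
      exact (hhm.comp (measurable_fst.sub measurable_snd)).stronglyMeasurable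
    exact hm.integral_prod_right
  · rw [hκ, RLint, intervalIntegral.integral_of_le ht.1.le]
    congr 1
    have hinter : Ioc 0 t = Ioc 0 T ∩ Ioc 0 t :=
      (inter_eq_right.2 (Ioc_subset_Ioc_right ht.2)).symm
    rw [hinter, ← setIntegral_indicator measurableSet_Ioc]
    refine setIntegral_congr_fun measurableSet_Ioc fun s hs => ?_
    by_cases hst : s ≤ t
    · have h1 : t - s ∈ Ico 0 T := ⟨by linarith, by linarith [hs.1, ht.2]⟩
      have h2 : s ∈ Ioc 0 t := ⟨hs.1, hst⟩
      simp only [h, indicator_of_mem h1, indicator_of_mem h2]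
    · have h1 : t - s ∉ Ico 0 T := fun hh => hst (by linarith [hh.1])
      have h2 : s ∉ Ioc 0 t := fun hh => hst hh.2
      simp only [h, indicator_of_notMem h1, indicator_of_notMem h2, zero_mul]

/-! ### The potential term -/

/-- Let `κ t` be a uniformly bounded measurable family of functionals and `g` continuous. Then
`v ↦ ∫ Fint g t (κ t v)` over `(0, T]` is continuously differentiable, because `t ↦ κ t v` is
bounded and `g` is uniformly continuous on compact sets. -/
theorem nemytskii_primitive {E : Type*} [NormedAddCommGroup E] [NormedSpace ℝ E]
    {T C : ℝ} (hC : 0 < C) (κ : ℝ → E →L[ℝ] ℝ) (hκC : ∀ t, ‖κ t‖ ≤ C)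
    (hκm : ∀ w, StronglyMeasurable fun t => κ t w)
    (g : ℝ → ℝ → ℝ) (hg : Continuous (Function.uncurry g)) :
    ∃ D : E → E →L[ℝ] ℝ, Continuous D ∧ ∀ v,
      HasFDerivAt (fun v => ∫ t in Ioc 0 T, Fint g t (κ t v)) (D v) v ∧
      ∀ w, D v w = ∫ t in Ioc 0 T, g t (κ t v) * κ t w := by
  set μ : Measure ℝ := volume.restrict (Ioc 0 T) with hμ
  have hκb : ∀ t w, |κ t w| ≤ C * ‖w‖ := fun t w =>
    (κ t).le_of_opNorm_le (hκC t) w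
  -- `(t, κ t v)` stays in the compact set `[0, T] × [-C‖v‖, C‖v‖]`
  have hint : ∀ (h : ℝ → ℝ → ℝ), Continuous (Function.uncurry h) → ∀ v,
      ∃ M, StronglyMeasurable (fun t => h t (κ t v)) ∧
        ∀ᵐ t ∂μ, ‖h t (κ t v)‖ ≤ M := by
    intro h hh v
    obtain ⟨M, hM⟩ := ((isCompact_Icc (a := (0:ℝ)) (b := T)).prod
      (isCompact_Icc (a := -(C * ‖v‖)) (b := C * ‖v‖))).exists_bound_of_continuousOn
      hh.continuousOn
    refine ⟨M, hh.comp_stronglyMeasurable (stronglyMeasurable_id.prodMk (hκm v)), ?_⟩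
    refine (ae_restrict_iff' measurableSet_Ioc).2 (Eventually.of_forall fun t ht => ?_)
    exact hM (t, κ t v) ⟨⟨ht.1.le, ht.2⟩, abs_le.1 (hκb t v)⟩
  have hint1 : ∀ (h : ℝ → ℝ → ℝ), Continuous (Function.uncurry h) → ∀ v,
      Integrable (fun t => h t (κ t v)) μ := by
    intro h hh v
    obtain ⟨M, hm, hM⟩ := hint h hh v
    exact Integrable.of_bound hm.aestronglyMeasurable M hM
  have hint2 : ∀ v w, Integrable (fun t => g t (κ t v) * κ t w) μ := by
    intro v w
    obtain ⟨M, hm, hM⟩ := hint g hg v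
    refine Integrable.of_bound (C := M * (C * ‖w‖)) (hm.mul (hκm w)).aestronglyMeasurable ?_
    filter_upwards [hM] with t ht
    rw [norm_mul]
    exact mul_le_mul ht (hκb t w) (norm_nonneg _) ((norm_nonneg _).trans ht)
  have hunif : ∀ v, ∀ ε > 0, ∃ δ > 0, ∀ t ∈ Ioc 0 T, ∀ y, |y| ≤ δ →
      |g t (κ t v + y) - g t (κ t v)| ≤ ε := by
    intro v ε hε
    have hcomp := (isCompact_Icc (a := (0:ℝ)) (b := T)).prod
      (isCompact_Icc (a := -(C * ‖v‖ + 1)) (b := C * ‖v‖ + 1))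
    have huc := Metric.uniformContinuousOn_iff.1
      (hcomp.uniformContinuousOn_of_continuous hg.continuousOn) ε hε
    obtain ⟨δ, hδ, h⟩ := huc
    refine ⟨min 1 (δ / 2), by positivity, fun t ht y hy => ?_⟩
    have h1 := abs_le.1 (hκb t v)
    have hy1 : |y| ≤ 1 := hy.trans (min_le_left _ _)
    have hy2 : |y| ≤ δ / 2 := hy.trans (min_le_right _ _)
    have h2 := abs_le.1 hy1
    have := h (t, κ t v + y) ⟨⟨ht.1.le, ht.2⟩, by simp only [mem_Icc]; constructor <;> linarith⟩
      (t, κ t v) ⟨⟨ht.1.le, ht.2⟩, by simp only [mem_Icc]; constructor <;> linarith⟩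
      (by rw [Prod.dist_eq]; simp; linarith)
    exact this.le
  have hbound : ∀ v, ∃ M, ∀ w, ‖∫ t, g t (κ t v) * κ t w ∂μ‖ ≤ M * ‖w‖ := by
    intro v
    obtain ⟨M, hm, hM⟩ := hint g hg v
    refine ⟨M * C * μ.real univ, fun w => ?_⟩
    refine (norm_integral_le_of_norm_le_const (C := M * (C * ‖w‖)) ?_).trans_eq (by ring)
    filter_upwards [hM] with t ht
    rw [norm_mul]
    exact mul_le_mul ht (hκb t w) (norm_nonneg _) ((norm_nonneg _).trans ht)
  choose M hM using hbound
  let D : E → E →L[ℝ] ℝ := fun v => LinearMap.mkContinuous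
    { toFun := fun w => ∫ t, g t (κ t v) * κ t w ∂μ
      map_add' := fun w₁ w₂ => by
        simp only [map_add, mul_add]
        exact integral_add (hint2 v w₁) (hint2 v w₂)
      map_smul' := fun c w => by
        simp only [map_smul, smul_eq_mul, RingHom.id_apply]
        rw [← integral_const_mul]
        congr 1; ext t; ring } (M v) (hM v)
  have hD : ∀ v w, D v w = ∫ t, g t (κ t v) * κ t w ∂μ := fun v w => rfl
  have hFc : Continuous (Function.uncurry (Fint g)) := by
    unfold Fint
    exact intervalIntegral.continuous_parametric_primitive_of_continuous hg
  set m : ℝ := μ.real univ with hm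
  have hm0 : 0 ≤ m := measureReal_nonneg
  refine ⟨D, ?_, fun v => ⟨?_, hD v⟩⟩
  · rw [continuous_iff_continuousAt]
    intro v
    rw [Metric.continuousAt_iff]
    intro ε hε
    obtain ⟨δ, hδ, h⟩ := hunif v (ε / (2 * (C * m + 1))) (by positivity)
    refine ⟨δ / C, by positivity, fun {v'} hv' => ?_⟩
    rw [dist_eq_norm] at hv' ⊢
    refine lt_of_le_of_lt (ContinuousLinearMap.opNorm_le_bound _ (half_pos hε).le fun w => ?_)
      (half_lt_self hε)
    rw [sub_apply, hD, hD, ← integral_sub (hint2 _ _) (hint2 _ _)]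
    refine (norm_integral_le_of_norm_le_const
      (C := ε / (2 * (C * m + 1)) * (C * ‖w‖)) ?_).trans ?_
    · refine (ae_restrict_iff' measurableSet_Ioc).2 (Eventually.of_forall fun t ht => ?_)
      rw [← sub_mul, norm_mul]
      refine mul_le_mul ?_ (hκb t w) (norm_nonneg _) (by positivity)
      have := h t ht (κ t (v' - v)) ((hκb _ _).trans ?_)
      · simpa [map_sub] using this
      · rw [lt_div_iff₀ hC] at hv'; linarith
    · have : ε / (2 * (C * m + 1)) * (C * ‖w‖) * m
          = (ε / 2 * ‖w‖) * ((C * m) / (C * m + 1)) := by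
        field_simp
      rw [this]
      refine mul_le_of_le_one_right (by positivity) ?_
      rw [div_le_one (by positivity)]; linarith
  · rw [hasFDerivAt_iff_isLittleO_nhds_zero, Asymptotics.isLittleO_iff]
    intro ε hε
    obtain ⟨δ, hδ, h⟩ := hunif v (ε / (C * m + 1)) (by positivity)
    filter_upwards [Metric.ball_mem_nhds (0 : E) (show 0 < δ / C by positivity)] with w hw
    rw [mem_ball_zero_iff, lt_div_iff₀ hC] at hw
    have hsub : Integrable (fun t => Fint g t (κ t (v + w)) - Fint g t (κ t v)) μ :=
      (hint1 _ hFc _).sub (hint1 _ hFc _)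
    rw [hD, ← integral_sub (hint1 _ hFc _) (hint1 _ hFc _), ← integral_sub hsub (hint2 _ _)]
    refine (norm_integral_le_of_norm_le_const
      (C := ε / (C * m + 1) * (C * ‖w‖)) ?_).trans ?_
    · refine (ae_restrict_iff' measurableSet_Ioc).2 (Eventually.of_forall fun t ht => ?_)
      have hgt : Continuous (g t) := hg.comp (Continuous.prodMk_right t)
      -- the remainder is `∫ (g t s - g t x) ds` over the segment from `x` to `x + y`
      have key : Fint g t (κ t (v + w)) - Fint g t (κ t v) - g t (κ t v) * κ t w
          = ∫ s in (κ t v)..(κ t v + κ t w), (g t s - g t (κ t v)) := by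
        rw [intervalIntegral.integral_sub (hgt.intervalIntegrable _ _)
          intervalIntegrable_const, intervalIntegral.integral_const]
        unfold Fint
        rw [intervalIntegral.integral_interval_sub_left (hgt.intervalIntegrable _ _)
          (hgt.intervalIntegrable _ _), map_add]
        simp only [add_sub_cancel_left, smul_eq_mul]; ring
      rw [key]
      have hw' : |κ t w| ≤ δ := (hκb t w).trans (by linarith)
      refine (intervalIntegral.norm_integral_le_of_norm_le_const
        (C := ε / (C * m + 1)) ?_).trans ?_
      · intro s hs
        have := h t ht (s - κ t v) ?_
        · simpa using this
        · refine le_trans ?_ hw'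
          have := abs_sub_left_of_mem_uIcc (uIoc_subset_uIcc hs)
          simpa using this
      · rw [add_sub_cancel_left]
        have := hκb t w
        gcongr
    · have : ε / (C * m + 1) * (C * ‖w‖) * m
          = (ε * ‖w‖) * ((C * m) / (C * m + 1)) := by
        field_simp
      rw [this]
      refine mul_le_of_le_one_right (by positivity) ?_
      rw [div_le_one (by positivity)]; linarith

/-! ### The energy functional -/

theorem energy_contDiff_fderiv
    (T p α : ℝ) (hT : 0 < T) (hp : 1 < p) (hα1 : 1 / p < α) (hα2 : α ≤ 1)
    (f : ℝ → ℝ → ℝ)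
    (hf : ContinuousOn (fun q : ℝ × ℝ => f q.1 q.2) (Set.Icc 0 T ×ˢ Set.univ))
    (r1 : ℝ) (hr11 : 1 < r1) (hr1p : r1 < p)
    (a : ℝ → ℝ) (ha0 : ∀ t ∈ Set.Icc 0 T, 0 ≤ a t)
    (haint : IntegrableOn a (Set.Icc 0 T))
    (hH1 : ∀ t ∈ Set.Icc 0 T, ∀ x : ℝ, |f t x| ≤ r1 * a t * |x| ^ (r1 - 1))
    [Fact (1 ≤ ENNReal.ofReal p)] :
    ∃ DJ : LpT p T → (LpT p T →L[ℝ] ℝ), Continuous DJ ∧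
      ∀ v : LpT p T, HasFDerivAt (JLp T p α f) (DJ v) v ∧
        ∀ w : LpT p T,
          DJ v w = (∫ t in (0:ℝ)..T,
              |(v : ℝ → ℝ) t| ^ (p - 2) * (v : ℝ → ℝ) t * (w : ℝ → ℝ) t)
            - ∫ t in (0:ℝ)..T,
                f t (RLint α (v : ℝ → ℝ) t) * RLint α (w : ℝ → ℝ) t := by
  obtain ⟨C, hC, κ, hκC, hκm, hκ⟩ := exists_RLint_clm (T := T) hp hα1
  -- `f` is only controlled for `t ∈ [0, T]`; freeze it outside to get continuity on the plane.
  let g : ℝ → ℝ → ℝ := fun t x => f (projIcc 0 T hT.le t) x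
  have hg : Continuous (Function.uncurry g) := by
    refine hf.comp_continuous (f := fun z : ℝ × ℝ => ((projIcc 0 T hT.le z.1 : ℝ), z.2)) ?_ ?_
    · exact (continuous_subtype_val.comp (continuous_projIcc.comp continuous_fst)).prodMk
        continuous_snd
    · exact fun z => ⟨(projIcc 0 T hT.le z.1).2, mem_univ _⟩
  have hgf : ∀ t ∈ Ioc 0 T, g t = f t := by
    intro t ht
    ext x
    simp only [g, projIcc_of_mem hT.le (Ioc_subset_Icc_self ht)]
  obtain ⟨D₁, hD₁c, hD₁⟩ := powerEnergy_hasFDerivAt (μ := volume.restrict (Ioc (0:ℝ) T)) hp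
  obtain ⟨D₂, hD₂c, hD₂⟩ := nemytskii_primitive (T := T) hC κ hκC hκm g hg
  refine ⟨fun v => D₁ v - D₂ v, hD₁c.sub hD₂c, fun v => ⟨?_, fun w => ?_⟩⟩
  · have hJ : JLp T p α f = fun v : LpT p T =>
        (1 / p) * (∫ t in Ioc 0 T, |(v : ℝ → ℝ) t| ^ p)
          - ∫ t in Ioc 0 T, Fint g t (κ t v) := by
      ext v
      rw [JLp, intervalIntegral.integral_of_le hT.le, intervalIntegral.integral_of_le hT.le]
      congr 1
      refine setIntegral_congr_fun measurableSet_Ioc fun t ht => ?_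
      simp only [Fint, hgf t ht, hκ t ht]
    rw [hJ]
    exact (hD₁ v).1.sub (hD₂ v).1
  · rw [sub_apply, (hD₁ v).2, (hD₂ v).2, intervalIntegral.integral_of_le hT.le,
      intervalIntegral.integral_of_le hT.le]
    congr 1
    refine setIntegral_congr_fun measurableSet_Ioc fun t ht => ?_
    simp only [hgf t ht, hκ t ht]
end

section
/- For every p with 1 < p < 2 there exists a constant C > 0 such that for all real numbers x and y with (x,y) ≠ (0,0), (φ_p(x) − φ_p(y))(x − y) ≥ C|x − y|²/(|x| + |y|)^{2−p}, where φ_p(s) = |s|^{p−2}s for s ≠ 0 and φ_p(0) = 0. -/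
/-!
The constant is `C = p - 1`. With `S = |x| + |y|`, it suffices that `φ_p` increases at rate at least
`(p - 1) S^(p-2)` on `[-S, S]`. On `[0, S]` this is the tangent-line inequality for the concave
function `t ↦ t^(p-1)` (Bernoulli's inequality), together with `b^(p-2) ≥ S^(p-2)` for `0 < b ≤ S`;
oddness of `φ_p` extends it to the whole interval. Multiplying by `x - y` gives the claim.
-/

/-- The p-Laplacian function `φ_p(s) = |s|^{p-2} s`. -/
noncomputable def phip (p s : ℝ) : ℝ := |s| ^ (p - 2) * s

lemma phip_neg (p s : ℝ) : phip p (-s) = -phip p s := by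
  simp [phip]

lemma phip_zero (p : ℝ) : phip p 0 = 0 := by
  simp [phip]

lemma phip_of_nonneg {p s : ℝ} (hp1 : 1 < p) (hs : 0 ≤ s) : phip p s = s ^ (p - 1) := by
  rcases hs.eq_or_lt with rfl | hs
  · rw [phip_zero, Real.zero_rpow (by linarith)]
  · rw [phip, abs_of_pos hs, ← Real.rpow_add_one hs.ne']
    congr 1
    ring

/-- The growth-rate bound on the half-interval `[0, S]`, from concavity of `t ↦ t^(p-1)`. -/
lemma phip_growth_of_nonneg {p a b S : ℝ} (hp1 : 1 < p) (hp2 : p < 2) (ha : 0 ≤ a) (hab : a ≤ b)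
    (hbS : b ≤ S) : (p - 1) * S ^ (p - 2) * (b - a) ≤ phip p b - phip p a := by
  rcases hab.eq_or_lt with rfl | hab
  · simp
  have hb : 0 < b := ha.trans_lt hab
  -- Bernoulli at `1 + (a / b - 1)`, rescaled by `b ^ (p - 1)`.
  have hB : (1 + (a / b - 1)) ^ (p - 1) ≤ 1 + (p - 1) * (a / b - 1) :=
    rpow_one_add_le_one_add_mul_self
      (by have := div_nonneg ha hb.le; linarith) (by linarith) (by linarith)
  rw [add_sub_cancel, Real.div_rpow ha hb.le,
    div_le_iff₀ (Real.rpow_pos_of_pos hb _)] at hB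
  have hpow : b ^ (p - 1) = b ^ (p - 2) * b := by
    rw [← Real.rpow_add_one hb.ne']
    congr 1
    ring
  have hS : S ^ (p - 2) ≤ b ^ (p - 2) :=
    Real.rpow_le_rpow_of_nonpos hb hbS (by linarith)
  rw [phip_of_nonneg hp1 ha, phip_of_nonneg hp1 hb.le]
  have hT : (1 + (p - 1) * (a / b - 1)) * b ^ (p - 1)
      = b ^ (p - 1) - (p - 1) * b ^ (p - 2) * (b - a) := by
    rw [hpow]
    field_simp
    ring
  have hm : (p - 1) * S ^ (p - 2) * (b - a) ≤ (p - 1) * b ^ (p - 2) * (b - a) :=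
    mul_le_mul_of_nonneg_right (mul_le_mul_of_nonneg_left hS (by linarith)) (by linarith)
  linarith

/-- The growth-rate bound on the whole interval `[-S, S]`. -/
lemma phip_growth {p x y S : ℝ} (hp1 : 1 < p) (hp2 : p < 2) (hyx : y ≤ x)
    (hx : |x| ≤ S) (hy : |y| ≤ S) :
    (p - 1) * S ^ (p - 2) * (x - y) ≤ phip p x - phip p y := by
  rw [abs_le] at hx hy
  rcases le_total 0 y with h0y | hy0
  · exact phip_growth_of_nonneg hp1 hp2 h0y hyx hx.2
  rcases le_total 0 x with h0x | hx0
  · have h1 := phip_growth_of_nonneg hp1 hp2 le_rfl h0x hx.2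
    have h2 := phip_growth_of_nonneg (b := -y) hp1 hp2 le_rfl (by linarith)
      (by linarith : -y ≤ S)
    rw [phip_zero] at h1 h2
    rw [phip_neg] at h2
    linarith
  · have h := phip_growth_of_nonneg (a := -x) (b := -y) hp1 hp2 (by linarith) (by linarith)
      (by linarith : -y ≤ S)
    rw [phip_neg, phip_neg] at h
    linarith

theorem phip_strong_monotone_of_lt_two (p : ℝ) (hp1 : 1 < p) (hp2 : p < 2) :
    ∃ C : ℝ, 0 < C ∧ ∀ x y : ℝ, (x, y) ≠ (0, 0) →
      C * |x - y| ^ (2:ℝ) / (|x| + |y|) ^ (2 - p) ≤ (phip p x - phip p y) * (x - y) := by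
  refine ⟨p - 1, by linarith, fun x y _ => ?_⟩
  have hx : |x| ≤ |x| + |y| := by linarith [abs_nonneg y]
  have hy : |y| ≤ |x| + |y| := by linarith [abs_nonneg x]
  have hinv : (|x| + |y|) ^ (p - 2) = ((|x| + |y|) ^ (2 - p))⁻¹ := by
    rw [← Real.rpow_neg (by positivity), neg_sub]
  rw [Real.rpow_two, sq_abs, div_eq_mul_inv, ← hinv]
  rcases le_total y x with h | h
  · have := mul_le_mul_of_nonneg_right (phip_growth hp1 hp2 h hx hy) (sub_nonneg.2 h)
    linarith
  · have := mul_le_mul_of_nonneg_right (phip_growth hp1 hp2 h hy hx) (sub_nonneg.2 h)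
    linarith
end
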